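/- Let B be a type with the discrete topology, let ℕ → B carry the product topology, let A : Set B, equip ↥A with the discrete topology and ℕ → ↥A with the product topology, and let ι : (ℕ → ↥A) → (ℕ → B) be the map x ↦ (fun n => (x n : B)). Assume A contains two distinct elements and there exists b : B with b ∉ A. Then there exists a set O ⊆ (ℕ → ↥A) that is open in ℕ → ↥A such that ι '' O is neither open nor closed in ℕ → B. (The jump of open sets from Σ⁰₁ in A^ω to Σ⁰₂ in B^ω is realized: some open set of A^ω lands outside Σ⁰₁ ∪ Π⁰₁ of B^ω.) -/

import Mathlib

/-!
A basic neighbourhood in an infinite product constrains only finitely many coordinates, so a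
product of infinitely many proper subsets has empty interior. This is used twice. The image of any
nonempty `O` lies in `A^ω`, a product of proper subsets of `B`, so it is not open. For `O` take the
complement of a product of closed nonempty proper subsets of `A`: it is open but not closed, and its
image is not closed because `O` is the preimage of that image under the continuous injection
`A^ω → B^ω`.
-/

open Set Function

theorem interior_pi_eq_empty_of_infinite {ι : Type*} {X : ι → Type*}
    [∀ i, TopologicalSpace (X i)] {I : Set ι} {s : ∀ i, Set (X i)}
    (hs : {i ∈ I | s i ≠ univ}.Infinite) : interior (I.pi s) = ∅ := by
  classical
  refine eq_empty_of_forall_notMem fun x hx ↦ ?_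
  have (i : ι) : Nonempty (X i) := ⟨x i⟩
  choose! y hy using fun i ↦ (ne_univ_iff_exists_notMem (s i)).1
  obtain ⟨F, hF⟩ :=
    exists_finset_piecewise_mem_of_mem_nhds (mem_interior_iff_mem_nhds.1 hx) y
  obtain ⟨i, ⟨hiI, hi⟩, hiF⟩ := hs.exists_notMem_finset F
  exact hy i hi (by simpa [hiF] using hF i hiI)

theorem exists_isClosed_nonempty_ne_univ (X : Type*) [TopologicalSpace X] [NontrivialTopology X] :
    ∃ C : Set X, IsClosed C ∧ C.Nonempty ∧ C ≠ univ := by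
  obtain ⟨x, y, hxy⟩ := NontrivialTopology.exists_not_inseparable ‹NontrivialTopology X›
  obtain ⟨U, hU, ⟨hx, hy⟩ | ⟨hy, hx⟩⟩ := not_inseparable_iff_exists_open.1 hxy
  · exact ⟨Uᶜ, hU.isClosed_compl, ⟨y, hy⟩, compl_ne_univ.2 ⟨x, hx⟩⟩
  · exact ⟨Uᶜ, hU.isClosed_compl, ⟨x, hx⟩, compl_ne_univ.2 ⟨y, hy⟩⟩

section InfiniteProduct

variable {ι : Type*} [Infinite ι] {X Y : ι → Type*} [∀ i, TopologicalSpace (X i)]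

theorem interior_univ_pi_eq_empty {s : ∀ i, Set (X i)} (hs : ∀ i, s i ≠ univ) :
    interior (univ.pi s) = ∅ :=
  interior_pi_eq_empty_of_infinite (by simpa [hs] using infinite_univ)

variable (X) in
theorem exists_isOpen_not_isClosed_pi [∀ i, NontrivialTopology (X i)] :
    ∃ O : Set (∀ i, X i), IsOpen O ∧ ¬ IsClosed O := by
  choose C hC hne hproper using fun i ↦ exists_isClosed_nonempty_ne_univ (X i)
  refine ⟨(univ.pi C)ᶜ, (isClosed_set_pi fun i _ ↦ hC i).isOpen_compl, fun hclosed ↦ ?_⟩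
  have hopen : IsOpen (univ.pi C) := isClosed_compl_iff.1 hclosed
  exact (univ_pi_nonempty_iff.2 hne).ne_empty
    (hopen.interior_eq.symm.trans (interior_univ_pi_eq_empty hproper))

theorem exists_open_set_image_neither_open_nor_closed_general [∀ i, TopologicalSpace (Y i)]
    [∀ i, NontrivialTopology (X i)] {f : ∀ i, X i → Y i} (hcont : ∀ i, Continuous (f i))
    (hinj : ∀ i, Injective (f i)) (hnsurj : ∀ i, ¬ Surjective (f i)) :
    ∃ O : Set (∀ i, X i), IsOpen O ∧ ¬ IsOpen (Pi.map f '' O) ∧ ¬ IsClosed (Pi.map f '' O) := by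
  obtain ⟨O, hopen, hnotclosed⟩ := exists_isOpen_not_isClosed_pi X
  refine ⟨O, hopen, fun himage ↦ ?_, fun himage ↦ hnotclosed ?_⟩
  · have hrange : interior (range (Pi.map f)) = ∅ := by
      rw [range_piMap]
      exact interior_univ_pi_eq_empty fun i ↦ mt range_eq_univ.1 (hnsurj i)
    have hempty : Pi.map f '' O = ∅ :=
      subset_eq_empty (interior_maximal (image_subset_range _ O) himage) hrange
    exact hnotclosed (image_eq_empty.1 hempty ▸ isClosed_empty)
  · rw [← preimage_image_eq O (Injective.piMap hinj)]
    exact himage.preimage (.piMap hcont)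

end InfiniteProduct

theorem exists_open_set_image_neither_open_nor_closed
    (B : Type*) [TopologicalSpace B] [DiscreteTopology B] (A : Set B)
    (hA : ∃ a₁ ∈ A, ∃ a₂ ∈ A, a₁ ≠ a₂) (hB : ∃ b : B, b ∉ A) :
    ∃ O : Set (ℕ → ↥A), IsOpen O ∧
      ¬ IsOpen ((fun (x : ℕ → ↥A) (n : ℕ) => (x n : B)) '' O) ∧
      ¬ IsClosed ((fun (x : ℕ → ↥A) (n : ℕ) => (x n : B)) '' O) := by
  obtain ⟨a₁, h₁, a₂, h₂, hne⟩ := hA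
  obtain ⟨b, hb⟩ := hB
  have : NontrivialTopology A := .of_exists_not_inseparable
    ⟨⟨a₁, h₁⟩, ⟨a₂, h₂⟩, fun h ↦ hne (congrArg Subtype.val h.eq)⟩
  exact exists_open_set_image_neither_open_nor_closed_general (fun _ : ℕ ↦ continuous_subtype_val)
    (fun _ ↦ Subtype.val_injective) fun _ h ↦ hb (by simpa using h b)
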